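/- arXiv:2604.23863 — 7 statements merged into one kernel-verified Lean document; each statement's English description precedes it below -/
import Mathlib

section
/- If A ⊆ X is control invariant and A ⊆ {x | 0 ≤ l x}, then A ⊆ S. That is, any control-invariant set contained in the constraint set is contained in the safe set. -/
/-- Discrete-time trajectory under dynamics `f`, initial state `x`, controls `u`. -/
def traj {X U : Type*} (f : X → U → X) (x : X) (u : ℕ → U) : ℕ → X
  | 0 => x
  | n + 1 => f (traj f x u n) (u n)

/-- The safe set: states from which some control sequence keeps `l ≥ 0` forever. -/
def safeSet {X U : Type*} (f : X → U → X) (l : X → ℝ) : Set X :=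
  {x | ∃ u : ℕ → U, ∀ n : ℕ, 0 ≤ l (traj f x u n)}

/-- Any control-invariant set contained in the constraint set is contained in the safe set. -/
theorem controlInvariant_subset_safeSet {X U : Type*} (f : X → U → X) (l : X → ℝ)
    (A : Set X) (hInv : ∀ x ∈ A, ∃ v : U, f x v ∈ A)
    (hCons : A ⊆ {x | 0 ≤ l x}) :
    A ⊆ safeSet f l := by
  intro x hx
  choose g hg using hInv
  let s : ℕ → A := fun n => Nat.rec ⟨x, hx⟩ (fun _ y => ⟨f y.1 (g y.1 y.2), hg y.1 y.2⟩) n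
  refine ⟨fun n => g (s n).1 (s n).2, fun n => ?_⟩
  have key : ∀ n, traj f x (fun n => g (s n).1 (s n).2) n = (s n).1 := by
    intro n
    induction n with
    | zero => rfl
    | succ k ih =>
      rw [traj, ih]
  rw [key n]
  exact hCons (s n).2
end

section
/- The safe set S is the maximal control-invariant subset of the constraint set: (i) S ⊆ {x | 0 ≤ l x}; (ii) S is control invariant; and (iii) every control-invariant set A with A ⊆ {x | 0 ≤ l x} satisfies A ⊆ S. Consequently S equals the union of all control-invariant subsets of {x | 0 ≤ l x}. -/
theorem traj_shift {X U : Type*} (f : X → U → X) (x : X) (u : ℕ → U) (n : ℕ) :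
    traj f (f x (u 0)) (fun k => u (k + 1)) n = traj f x u (n + 1) := by
  induction n with
  | zero => rfl
  | succ n ih =>
    change f (traj f (f x (u 0)) (fun k => u (k + 1)) n) (u (n + 1)) = _
    rw [ih]
    rfl

/-- The safe set is the maximal control-invariant subset of the constraint set, and it
equals the union of all control-invariant subsets of the constraint set. -/
theorem safeSet_maximal_control_invariant {X U : Type*} (f : X → U → X) (l : X → ℝ) :
    (safeSet f l ⊆ {x | 0 ≤ l x}) ∧
    (∀ x ∈ safeSet f l, ∃ v : U, f x v ∈ safeSet f l) ∧
    (∀ A : Set X, (∀ x ∈ A, ∃ v : U, f x v ∈ A) → A ⊆ {x | 0 ≤ l x} → A ⊆ safeSet f l) ∧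
    safeSet f l = ⋃₀ {A : Set X | (∀ x ∈ A, ∃ v : U, f x v ∈ A) ∧ A ⊆ {x | 0 ≤ l x}} := by
  have h1 : safeSet f l ⊆ {x | 0 ≤ l x} := by
    rintro x ⟨u, hu⟩
    exact hu 0
  have h2 : ∀ x ∈ safeSet f l, ∃ v : U, f x v ∈ safeSet f l := by
    rintro x ⟨u, hu⟩
    refine ⟨u 0, fun k => u (k + 1), fun n => ?_⟩
    rw [traj_shift]
    exact hu (n + 1)
  have h3 : ∀ A : Set X, (∀ x ∈ A, ∃ v : U, f x v ∈ A) → A ⊆ {x | 0 ≤ l x} →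
      A ⊆ safeSet f l := by
    intro A hA hl x hx
    choose g hg using hA
    let y : ℕ → A := fun n =>
      Nat.rec (motive := fun _ => A) ⟨x, hx⟩ (fun _ a => ⟨f a.1 (g a.1 a.2), hg a.1 a.2⟩) n
    have hy : ∀ n, traj f x (fun k => g (y k).1 (y k).2) n = (y n).1 := by
      intro n
      induction n with
      | zero => rfl
      | succ n ih =>
        change f (traj f x (fun k => g (y k).1 (y k).2) n) (g (y n).1 (y n).2) = _
        rw [ih]
    refine ⟨fun k => g (y k).1 (y k).2, fun n => ?_⟩
    rw [hy]
    exact hl (y n).2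
  refine ⟨h1, h2, h3, Set.Subset.antisymm ?_ ?_⟩
  · exact fun x hx => ⟨safeSet f l, ⟨h2, h1⟩, hx⟩
  · rintro x ⟨A, ⟨hA, hl⟩, hx⟩
    exact h3 A hA hl hx
end

section
/- The safe set satisfies the fixed-point characterization S = {x | 0 ≤ l x ∧ ∃ v : U, f x v ∈ S}: a state is safe if and only if it satisfies the state constraint and some admissible control maps it in one step to a safe state. -/
/-- Fixed-point characterization of the safe set: a state is safe iff it satisfies the
state constraint and some control maps it in one step to a safe state. -/
theorem safeSet_fixed_point {X U : Type*} (f : X → U → X) (l : X → ℝ) :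
    safeSet f l = {x | 0 ≤ l x ∧ ∃ v : U, f x v ∈ safeSet f l} := by
  ext x
  constructor
  · rintro ⟨u, hu⟩
    refine ⟨hu 0, u 0, fun k => u (k + 1), fun n => ?_⟩
    rw [traj_shift]
    exact hu (n + 1)
  · rintro ⟨h0, v, u, hu⟩
    let w : ℕ → U := fun n => Nat.casesOn n v u
    refine ⟨w, fun n => ?_⟩
    cases n with
    | zero => exact h0
    | succ k =>
      rw [← traj_shift f x w k]
      exact hu k
end

section
/- Feasibility at safe states: if x ∈ S, then for every planning horizon h : ℕ the Safety Value MPC problem is feasible at x; in fact there exists u : ℕ → U such that 0 ≤ l (traj x u k) for all k < h, traj x u h ∈ S, and moreover traj x u k ∈ S for all k. -/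
/-- MPC feasibility for planning horizon `h`: some control keeps the constraint satisfied
for the first `h` steps and steers the terminal state into the safe set. -/
def MPCFeasible {X U : Type*} (f : X → U → X) (l : X → ℝ) (h : ℕ) (x : X) : Prop :=
  ∃ u : ℕ → U, (∀ k < h, 0 ≤ l (traj f x u k)) ∧ traj f x u h ∈ safeSet f l

/-- Feasibility at safe states: if `x ∈ S` then for every horizon `h` the Safety Value MPC
problem is feasible at `x`, with a plan whose entire trajectory stays in the safe set. -/
theorem mpcFeasible_of_mem_safeSet {X U : Type*} (f : X → U → X) (l : X → ℝ)
    (x : X) (hx : x ∈ safeSet f l) (h : ℕ) :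
    ∃ u : ℕ → U, (∀ k < h, 0 ≤ l (traj f x u k)) ∧ traj f x u h ∈ safeSet f l ∧
      ∀ k : ℕ, traj f x u k ∈ safeSet f l := by
  obtain ⟨u, hu⟩ := hx
  have key : ∀ k n : ℕ, traj f (traj f x u k) (fun i => u (k + i)) n = traj f x u (k + n) := by
    intro k n
    induction n with
    | zero => rfl
    | succ n ih =>
      change f (traj f (traj f x u k) (fun i => u (k + i)) n) (u (k + n)) =
        f (traj f x u (k + n)) (u (k + n))
      rw [ih]
  have hs : ∀ k : ℕ, traj f x u k ∈ safeSet f l := fun k =>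
    ⟨fun i => u (k + i), fun n => by rw [key]; exact hu _⟩
  exact ⟨u, fun k _ => hu k, hs h, hs⟩
end

section
/- The feasible set of the Safety Value MPC equals the safe set: for every planning horizon h : ℕ, the set of MPC-feasible states is exactly S, i.e. {x | ∃ u : ℕ → U, (∀ k < h, 0 ≤ l (traj x u k)) ∧ traj x u h ∈ S} = S. -/
theorem traj_add_aux {X U : Type*} (f : X → U → X) (x : X) (u : ℕ → U) (h n : ℕ) :
    traj f x u (h + n) = traj f (traj f x u h) (fun k => u (h + k)) n := by
  induction n with
  | zero => rfl
  | succ n ih =>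
    show f (traj f x u (h + n)) (u (h + n)) = f (traj f (traj f x u h) (fun k => u (h + k)) n) (u (h + n))
    rw [ih]

theorem traj_congr_aux {X U : Type*} (f : X → U → X) (x : X) (u v : ℕ → U) (n : ℕ)
    (huv : ∀ k < n, u k = v k) : traj f x u n = traj f x v n := by
  induction n with
  | zero => rfl
  | succ n ih =>
    show f (traj f x u n) (u n) = f (traj f x v n) (v n)
    rw [ih (fun k hk => huv k (by omega)), huv n (by omega)]

/-- The feasible set of the Safety Value MPC equals the safe set, for every horizon. -/
theorem mpcFeasible_set_eq_safeSet {X U : Type*} (f : X → U → X) (l : X → ℝ) (h : ℕ) :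
    {x : X | ∃ u : ℕ → U, (∀ k < h, 0 ≤ l (traj f x u k)) ∧ traj f x u h ∈ safeSet f l}
      = safeSet f l := by
  ext x
  constructor
  · rintro ⟨u, hu, v, hv⟩
    have key : ∀ k ≤ h, traj f x (fun k => if k < h then u k else v (k - h)) k = traj f x u k := by
      intro k hk
      apply traj_congr_aux
      intro j hj
      have : j < h := by omega
      simp [this]
    refine ⟨fun k => if k < h then u k else v (k - h), fun n => ?_⟩
    by_cases hn : n < h
    · rw [key n hn.le]
      exact hu n hn
    · obtain ⟨m, rfl⟩ := Nat.exists_eq_add_of_le (not_lt.mp hn)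
      rw [traj_add_aux, key h le_rfl]
      simpa using hv m
  · rintro ⟨u, hu⟩
    refine ⟨u, fun k _ => hu k, fun k => u (h + k), fun n => ?_⟩
    rw [← traj_add_aux]
    exact hu (h + n)
end

section
/- Level-set characterization of the safe set under attainment: suppose that for every x : X the supremum defining V is attained, i.e. there exists u* : ℕ → U with V x = ⨅ (n : ℕ), ((l (traj x u* n) : ℝ) : EReal). Then the super-zero level set of the safety value function equals the safe set: {x | 0 ≤ V x} = S. -/
/-- The (converged) safety value function. -/
noncomputable def safetyValue {X U : Type*} (f : X → U → X) (l : X → ℝ) (x : X) : EReal :=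
  ⨆ (u : ℕ → U), ⨅ (n : ℕ), ((l (traj f x u n) : ℝ) : EReal)

/-- Level-set characterization of the safe set under attainment of the supremum defining
the safety value function: the super-zero level set of `V` equals the safe set. -/
theorem levelSet_safetyValue_eq_safeSet {X U : Type*} (f : X → U → X) (l : X → ℝ)
    (hAttain : ∀ x : X, ∃ u : ℕ → U,
      safetyValue f l x = ⨅ (n : ℕ), ((l (traj f x u n) : ℝ) : EReal)) :
    {x : X | 0 ≤ safetyValue f l x} = safeSet f l := by
  ext x
  constructor
  · intro hx
    obtain ⟨u, hu⟩ := hAttain x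
    have hx' : (0 : EReal) ≤ safetyValue f l x := hx
    rw [hu] at hx'
    exact ⟨u, fun n => EReal.coe_nonneg.mp (le_iInf_iff.mp hx' n)⟩
  · rintro ⟨u, hu⟩
    change (0 : EReal) ≤ ⨆ (u : ℕ → U), ⨅ (n : ℕ), ((l (traj f x u n) : ℝ) : EReal)
    refine le_iSup_of_le u ?_
    exact le_iInf fun n => EReal.coe_nonneg.mpr (hu n)
end

section
/- Horizon-independence of recursive feasibility: for any two planning horizons h₁ h₂ : ℕ, a state x is MPC-feasible for horizon h₁ if and only if it is MPC-feasible for horizon h₂. Hence safety of the Safety Value MPC feasible set does not depend on the length of the planning horizon. -/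
theorem mpcFeasible_iff_aux {X U : Type*} (f : X → U → X) (l : X → ℝ) (h : ℕ) (x : X) :
    MPCFeasible f l h x ↔ x ∈ safeSet f l := by
  constructor
  · rintro ⟨u, hu, v, hv⟩
    let w : ℕ → U := fun k => if k < h then u k else v (k - h)
    have hw : ∀ n ≤ h, traj f x w n = traj f x u n := fun n hn =>
      traj_congr_aux f x w u n (fun k hk => if_pos (by omega))
    refine ⟨w, fun n => ?_⟩
    by_cases hn : n < h
    · rw [hw n hn.le]
      exact hu n hn
    · obtain ⟨m, rfl⟩ := Nat.exists_eq_add_of_le (not_lt.mp hn)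
      have hs : (fun k => w (h + k)) = v := by
        funext k
        simp [w]
      rw [traj_add_aux, hw h le_rfl, hs]
      exact hv m
  · rintro ⟨u, hu⟩
    refine ⟨u, fun k _ => hu k, fun k => u (h + k), fun n => ?_⟩
    rw [← traj_add_aux]
    exact hu _

/-- Horizon-independence of MPC feasibility: feasibility does not depend on the
planning horizon. -/
theorem mpcFeasible_horizon_independent {X U : Type*} (f : X → U → X) (l : X → ℝ)
    (h₁ h₂ : ℕ) (x : X) :
    MPCFeasible f l h₁ x ↔ MPCFeasible f l h₂ x := by
  rw [mpcFeasible_iff_aux, mpcFeasible_iff_aux]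
end
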